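/- arXiv:1211.0639 — 4 statements merged into one kernel-verified Lean document; each statement's English description precedes it below -/
import Mathlib

section
/- Let n ≥ 2 and let α_1, …, α_n be complex numbers that are algebraic over ℚ. Assume that the functions z ↦ exp(α_1 z), …, z ↦ exp(α_n z), considered as elements of the ℚ-algebra of all functions ℂ → ℂ with pointwise operations, are algebraically independent over ℚ. Then for every nonzero complex number β that is algebraic over ℚ, the complex numbers exp(α_1 β), …, exp(α_n β) are algebraically independent over ℚ. -/
open Polynomial in
theorem lw_core {K : Type} [Field K] [NumberField K] [IsGalois ℚ K] (φ : K →+* ℂ)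
    (c : K →₀ ℤ) (hinv : ∀ (σ : K ≃ₐ[ℚ] K) (k : K), c (σ k) = c k) (h0 : c 0 ≠ 0) :
    c.sum (fun k b => (b : ℂ) * Complex.exp (φ k)) ≠ 0 := by
  classical
  intro hsum
  set s := c.support.erase 0 with hs
  have hq : ∀ k : K, ∃ q : ℤ[X], (k ≠ 0 → q.eval 0 ≠ 0 ∧ aeval k q = 0) := by
    intro k
    by_cases hk : k = 0
    · exact ⟨0, fun h => (h hk).elim⟩
    have : IsAlgebraic ℤ k := 
      (IsFractionRing.isAlgebraic_iff ℤ ℚ K).2 (Algebra.IsAlgebraic.isAlgebraic k)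
    obtain ⟨q, hq1, hq2⟩ := this.exists_nonzero_coeff_and_aeval_eq_zero (mem_nonZeroDivisors_of_ne_zero hk)
    exact ⟨q, fun _ => ⟨by rwa [← coeff_zero_eq_eval_zero], hq2⟩⟩
  choose q hq using hq
  set f : ℤ[X] := ∏ k ∈ s, q k with hf
  have hf0 : f.eval 0 ≠ 0 := by
    rw [hf, eval_prod]
    exact Finset.prod_ne_zero_iff.2 fun k hk => (hq k (Finset.ne_of_mem_erase hk)).1
  have hfne : f ≠ 0 := by rintro h; simp [h] at hf0
  have hfk : ∀ k ∈ s, aeval k f = 0 := by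
    intro k hk
    rw [hf, map_prod]
    exact Finset.prod_eq_zero hk (hq k (Finset.ne_of_mem_erase hk)).2
  have hroot : ∀ k ∈ s, φ k ∈ f.aroots ℂ := by
    intro k hk
    rw [mem_aroots]
    refine ⟨hfne, ?_⟩
    have := congrArg φ (hfk k hk)
    rw [map_zero] at this
    rw [← this]
    exact (Polynomial.hom_eval₂ f (algebraMap ℤ K) φ k ▸ by
      rw [aeval_def]; congr 1; exact RingHom.ext_int _ _)
  set m := f.leadingCoeff with hm
  have hm0 : m ≠ 0 := leadingCoeff_ne_zero.2 hfne
  set d := f.natDegree with hd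
  obtain ⟨C, hC⟩ := LindemannWeierstrass.exp_polynomial_approx f hf0
  -- the total weight of the nonzero exponents
  set W : ℝ := ∑ k ∈ s, |(c k : ℝ)| with hW
  set A : ℝ := |(m : ℝ)| ^ d * C with hA
  have hlim : Filter.Tendsto (fun n : ℕ => A ^ n / (n.factorial : ℝ) * (A * W)) Filter.atTop (nhds 0) := by
    simpa using (FloorSemiring.tendsto_pow_div_factorial_atTop A).mul_const (A * W)
  obtain ⟨N, hN⟩ := Filter.eventually_atTop.1 (hlim.eventually (gt_mem_nhds one_pos))
  obtain ⟨p, hpN, hp⟩ := Nat.exists_infinite_primes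
    (N + (eval 0 f).natAbs + m.natAbs + (c 0).natAbs + 2)
  obtain ⟨n, hpn, g, hgdeg, hg⟩ := hC p (by omega) hp
  -- the algebraic number
  set S : K := ∑ k ∈ s, (c k : K) * aeval k g with hS
  have hSfix : ∀ σ : K ≃ₐ[ℚ] K, σ S = S := by
    intro σ
    rw [hS, map_sum]
    refine Finset.sum_bij (fun k _ => σ k) ?_ ?_ ?_ ?_
    · intro k hk
      simp only [hs, Finset.mem_erase, Finsupp.mem_support_iff] at hk ⊢
      rw [hinv]
      exact ⟨by simpa using hk.1, hk.2⟩
    · intro a _ b _ h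
      exact σ.injective h
    · intro k hk
      refine ⟨σ.symm k, ?_, by simp⟩
      simp only [hs, Finset.mem_erase, Finsupp.mem_support_iff] at hk ⊢
      have := hinv σ (σ.symm k)
      rw [σ.apply_symm_apply] at this
      rw [← this]
      exact ⟨by simpa using hk.1, hk.2⟩
    · intro k hk
      rw [map_mul, hinv, map_intCast]
      congr 1
      rw [aeval_def, aeval_def]
      have := Polynomial.hom_eval₂ g (algebraMap ℤ K) (σ : K →+* K) k
      rw [show ((σ : K →+* K).comp (algebraMap ℤ K)) = algebraMap ℤ K from RingHom.ext_int _ _] at this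
      exact this
  obtain ⟨r, hr⟩ := (IsGalois.mem_range_algebraMap_iff_fixed S).2 hSfix
  have hInt : IsIntegral ℤ ((m : K) ^ (p * d) * S) := by
    rw [hS, Finset.mul_sum]
    refine IsIntegral.sum _ fun k hk => ?_
    rw [aeval_eq_sum_range, Finset.mul_sum, Finset.mul_sum]
    refine IsIntegral.sum _ fun i hi => ?_
    have hi' : i ≤ p * d := by
      have := Finset.mem_range_succ_iff.1 hi
      exact (this.trans hgdeg).trans (Nat.sub_le _ _)
    have h1 : IsIntegral ℤ ((m : K) * k) := by
      have := isIntegral_leadingCoeff_smul f k (hfk k hk)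
      rwa [zsmul_eq_mul] at this
    have e : (m : K) ^ (p * d) * ((c k : K) * (g.coeff i • k ^ i)) =
        ((m ^ (p * d - i) * c k * g.coeff i : ℤ) : K) * ((m : K) * k) ^ i := by
      rw [zsmul_eq_mul]
      push_cast
      rw [mul_pow, ← pow_sub_mul_pow (m : K) hi']
      ring
    rw [e]
    exact (isIntegral_algebraMap (R := ℤ) (A := K)).mul (h1.pow i)
  have hInt' : IsIntegral ℤ ((m : ℚ) ^ (p * d) * r) := by
    rw [← isIntegral_algebraMap_iff (algebraMap ℚ K).injective]
    rw [map_mul, hr, map_pow, map_intCast]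
    exact hInt
  obtain ⟨T, hT⟩ := IsIntegrallyClosed.isIntegral_iff.1 hInt'
  have hTS : (T : ℂ) = (m : ℂ) ^ (p * d) * φ S := by
    rw [← hr]
    have := congrArg (fun x => φ (algebraMap ℚ K x)) hT
    simpa using this
  have hsum' : (c 0 : ℂ) + ∑ k ∈ s, (c k : ℂ) * Complex.exp (φ k) = 0 := by
    rw [← hsum, Finsupp.sum, ← Finset.add_sum_erase c.support _ (Finsupp.mem_support_iff.2 h0)]
    simp [hs]
  have hφS : φ S = ∑ k ∈ s, (c k : ℂ) * aeval (φ k) g := by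
    rw [hS, map_sum]
    refine Finset.sum_congr rfl fun k hk => ?_
    rw [map_mul, map_intCast, aeval_def, aeval_def, Polynomial.hom_eval₂]
    congr 2
    exact RingHom.ext_int _ _
  have hkey : ((m ^ (p * d) * n * c 0 + p * T : ℤ) : ℂ) =
      - ((m : ℂ) ^ (p * d) * ∑ k ∈ s, (c k : ℂ) * (n • Complex.exp (φ k) - p • aeval (φ k) g)) := by
    push_cast
    rw [hTS, hφS, eq_neg_of_add_eq_zero_left hsum']
    simp only [zsmul_eq_mul, nsmul_eq_mul, mul_sub, Finset.sum_sub_distrib, Finset.mul_sum,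
      mul_neg]
    rw [neg_sub, sub_eq_neg_add]
    congr 1
    · congr 1
      refine Finset.sum_congr rfl fun k _ => by ring
    · refine Finset.sum_congr rfl fun k _ => by ring
  have hbound : ‖((m ^ (p * d) * n * c 0 + p * T : ℤ) : ℂ)‖ < 1 := by
    rw [hkey, norm_neg, norm_mul, norm_pow]
    have h1 : ‖∑ k ∈ s, (c k : ℂ) * (n • Complex.exp (φ k) - p • aeval (φ k) g)‖ ≤
        W * (C ^ p / (p - 1).factorial) := by
      rw [hW, Finset.sum_mul]
      refine norm_sum_le_of_le _ fun k hk => ?_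
      rw [norm_mul, Complex.norm_intCast]
      exact mul_le_mul_of_nonneg_left (hg (hroot k hk)) (abs_nonneg _)
    have h2 := hN (p - 1) (by omega)
    refine lt_of_le_of_lt (mul_le_mul_of_nonneg_left h1 (by positivity)) ?_
    refine lt_of_eq_of_lt ?_ h2
    rw [Complex.norm_intCast]
    have e : A ^ (p - 1) * A = |(m : ℝ)| ^ (p * d) * C ^ p := by
      rw [← pow_succ, Nat.sub_add_cancel hp.one_le, hA, mul_pow, ← pow_mul, mul_comm d p]
    rw [div_mul_eq_mul_div, ← mul_assoc (A ^ (p - 1)), e]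
    ring
  have hzero : m ^ (p * d) * n * c 0 + p * T = 0 := by
    rw [Complex.norm_intCast] at hbound
    exact Int.abs_lt_one_iff.1 (by exact_mod_cast hbound)
  have hdvd : (p : ℤ) ∣ m ^ (p * d) * n * c 0 := by
    refine (Int.dvd_add_left (dvd_mul_right (p : ℤ) T)).1 ?_
    rw [hzero]; exact dvd_zero _
  have hpi : Prime (p : ℤ) := Nat.prime_iff_prime_int.1 hp
  have hsmall : ∀ a : ℤ, a ≠ 0 → a.natAbs < p → ¬ (p : ℤ) ∣ a := by
    intro a ha hlt hd
    have := Nat.le_of_dvd (Int.natAbs_pos.2 ha) (Int.natCast_dvd.1 hd)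
    omega
  rcases hpi.dvd_or_dvd hdvd with h | h
  · rcases hpi.dvd_or_dvd h with h | h
    · exact hsmall m hm0 (by omega) (hpi.dvd_of_dvd_pow h)
    · exact hpn h
  · exact hsmall _ h0 (by omega) h

open AddMonoidAlgebra in
theorem lw_indep {K : Type} [Field K] [NumberField K] [IsGalois ℚ K] (φ : K →+* ℂ) :
    LinearIndependent ℚ (fun k : K => Complex.exp (φ k)) := by
  classical
  rw [← LinearIndependent.iff_fractionRing ℤ ℚ, linearIndependent_iff]
  intro l hl
  by_contra hne
  let F : Multiplicative K →* ℂ :=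
    { toFun := fun k => Complex.exp (φ k.toAdd)
      map_one' := by simp
      map_mul' := by intro a b; simp [Complex.exp_add] }
  let E : AddMonoidAlgebra ℤ K →ₐ[ℤ] ℂ := lift ℤ ℂ K F
  have hE : ∀ x : AddMonoidAlgebra ℤ K,
      E x = x.coeff.sum (fun k b => (b : ℂ) * Complex.exp (φ k)) := by
    intro x
    simp only [E, lift_apply, zsmul_eq_mul]
    rfl
  let D (σ : K ≃ₐ[ℚ] K) : AddMonoidAlgebra ℤ K ≃ₐ[ℤ] AddMonoidAlgebra ℤ K :=
    domCongr ℤ ℤ (σ : K ≃+ K)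
  have hD : ∀ σ x k, (D σ x).coeff (σ k) = x.coeff k := by
    intro σ x k
    simp only [D, coeff_domCongr]
    congr 1
    exact σ.symm_apply_apply k
  have hDD : ∀ σ τ x, D σ (D τ x) = D (σ * τ) x := by
    intro σ τ x
    ext k
    have h1 := hD (σ * τ) x ((σ * τ)⁻¹ k)
    have h2 := hD σ (D τ x) (σ⁻¹ k)
    have h3 := hD τ x (τ⁻¹ (σ⁻¹ k))
    have e : ∀ (ρ : K ≃ₐ[ℚ] K) (z : K), ρ (ρ⁻¹ z) = z := fun ρ z => ρ.apply_symm_apply z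
    rw [e] at h1 h2 h3
    rw [h1, h2, h3, mul_inv_rev, AlgEquiv.mul_apply]
  let x : AddMonoidAlgebra ℤ K := ofCoeff l
  have hx : x ≠ 0 := fun h => hne (by simpa [x] using congrArg coeff h)
  have hEx : E x = 0 := by
    rw [hE, ← hl, Finsupp.linearCombination_apply]
    simp [x]
  let y := ∏ σ : K ≃ₐ[ℚ] K, D σ x
  have hy : y ≠ 0 := Finset.prod_ne_zero_iff.2 fun σ _ => by simpa using hx
  have hEy : E y = 0 := by
    simp only [y]
    rw [map_prod]
    refine Finset.prod_eq_zero (Finset.mem_univ 1) ?_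
    have : D 1 x = x := by
      ext k
      exact hD 1 x k
    rw [this, hEx]
  have hyinv : ∀ σ, D σ y = y := by
    intro σ
    simp only [y]
    rw [map_prod]
    simp only [hDD]
    exact Fintype.prod_equiv (Equiv.mulLeft σ) _ _ fun _ => rfl
  obtain ⟨δ, hδ⟩ : ∃ δ, y.coeff δ ≠ 0 := by
    by_contra! h
    exact hy (by ext k; simpa using h k)
  let u : AddMonoidAlgebra ℤ K := ∑ σ : K ≃ₐ[ℚ] K, D σ (single (-δ) 1)
  have huinv : ∀ σ, D σ u = u := by
    intro σ
    simp only [u]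
    rw [map_sum]
    simp only [hDD]
    exact Fintype.sum_equiv (Equiv.mulLeft σ) _ _ fun _ => rfl
  have hyc : ∀ (σ : K ≃ₐ[ℚ] K) (k : K), y.coeff (σ k) = y.coeff k := by
    intro σ k
    rw [← hD σ y k, hyinv]
  refine lw_core φ (y * u).coeff ?_ ?_ ?_
  · intro σ k
    rw [← hD σ (y * u) k, map_mul, hyinv, huinv]
  · have : (y * u).coeff 0 = ∑ σ : K ≃ₐ[ℚ] K, y.coeff δ := by
      simp only [u, Finset.mul_sum]
      rw [coeff_sum, Finsupp.finsetSum_apply]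
      refine Finset.sum_congr rfl fun σ _ => ?_
      have : D σ (single (-δ) 1) = single (-σ δ) 1 := by
        simp [D]
        rfl
      rw [this, coeff_mul_single_eq_coeff_mul (m₂ := σ δ), mul_one, hyc]
      intro z _
      rw [add_neg_eq_zero]
    rw [this]
    simp [hδ]
  · rw [← hE, map_mul, hEy, zero_mul]

/-- **Lindemann–Weierstrass theorem** (as stated in the paper).
If `α 1, …, α n` (`n ≥ 2`) are algebraic complex numbers such that the functions
`z ↦ exp (α i * z)` are algebraically independent over `ℚ` (in the `ℚ`-algebra `ℂ → ℂ`
of all functions with pointwise operations), then for every nonzero algebraic `β` the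
numbers `exp (α 1 * β), …, exp (α n * β)` are algebraically independent over `ℚ`. -/
theorem lindemann_weierstrass (n : ℕ) (hn : 2 ≤ n) (α : Fin n → ℂ)
    (halg : ∀ i, IsAlgebraic ℚ (α i))
    (hind : AlgebraicIndependent ℚ (fun i : Fin n => fun z : ℂ => Complex.exp (α i * z)))
    (β : ℂ) (hβ : β ≠ 0) (hβalg : IsAlgebraic ℚ β) :
    AlgebraicIndependent ℚ (fun i : Fin n => Complex.exp (α i * β)) := by
  classical
  have hγ : ∀ i, IsIntegral ℚ (α i * β) := fun i => ((halg i).mul hβalg).isIntegral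
  let P : Polynomial ℚ := ∏ i, minpoly ℚ (α i * β)
  have hP : P ≠ 0 := Finset.prod_ne_zero_iff.2 fun i _ => minpoly.ne_zero (hγ i)
  let K := IntermediateField.adjoin ℚ (P.rootSet ℂ)
  have : Polynomial.IsSplittingField ℚ K P :=
    IntermediateField.adjoin_rootSet_isSplittingField (IsAlgClosed.splits _)
  have : Normal ℚ K := Normal.of_isSplittingField P
  have : FiniteDimensional ℚ K := Polynomial.IsSplittingField.finiteDimensional K P
  have : NumberField K := { }
  have : IsGalois ℚ K := { }
  have hmem : ∀ i, α i * β ∈ K := by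
    intro i
    refine IntermediateField.subset_adjoin _ _ ?_
    rw [Polynomial.mem_rootSet]
    refine ⟨hP, ?_⟩
    simp only [P, map_prod]
    exact Finset.prod_eq_zero (Finset.mem_univ i) (minpoly.aeval _ _)
  let a : Fin n → K := fun i => ⟨α i * β, hmem i⟩
  let ψ : (Fin n →₀ ℕ) → K := fun e => ∑ i, (e i : K) * a i
  have hψ' : ∀ e, ((ψ e : K) : ℂ) = (∑ i, (e i : ℂ) * α i) * β := by
    intro e
    simp [ψ, a, Finset.sum_mul, mul_assoc]
  have hψ : Function.Injective ψ := by
    intro e e' h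
    have h' : (∑ i, (e i : ℂ) * α i) = ∑ i, (e' i : ℂ) * α i := by
      apply mul_right_cancel₀ hβ
      rw [← hψ', ← hψ', h]
    have hz : MvPolynomial.monomial e (1 : ℚ) = MvPolynomial.monomial e' 1 := by
      apply hind
      rw [MvPolynomial.aeval_monomial, MvPolynomial.aeval_monomial]
      funext z
      simp only [map_one, one_mul, Finsupp.prod_fintype _ _ (fun _ => pow_zero _), Finset.prod_apply, Pi.pow_apply,
        ← Complex.exp_nat_mul, ← Complex.exp_sum]
      congr 1
      simp only [← mul_assoc, ← Finset.sum_mul, h']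
    exact MvPolynomial.monomial_left_injective one_ne_zero hz
  have hli := (lw_indep (K.val : K →+* ℂ)).comp ψ hψ
  rw [linearIndependent_iff'] at hli
  rw [algebraicIndependent_iff]
  intro p hp
  ext e
  by_cases he : e ∈ p.support
  · refine hli p.support (fun e => p.coeff e) ?_ e he
    rw [← hp, MvPolynomial.aeval_def, MvPolynomial.eval₂_eq']
    refine Finset.sum_congr rfl fun e _ => ?_
    simp only [Function.comp, Algebra.smul_def, ← Complex.exp_nat_mul, ← Complex.exp_sum]
    congr 2
    refine (hψ' e).trans ?_
    simp only [← mul_assoc, ← Finset.sum_mul]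
  · simpa using he
end

section
/- Let 𝕜 be a field, n ≥ 1, and f_1, …, f_n ∈ 𝕜[[z]] formal power series. For all X, Y ∈ ℕ there exists a nonzero polynomial Q ∈ 𝕜[Z, X_1, …, X_n] with deg_Z Q ≤ X, total degree of Q in the variables X_1, …, X_n at most Y, and ord_{z=0} Q(z, f_1(z), …, f_n(z)) ≥ (X+1)·binom(Y+n, n) − 1 (order taken in ℕ ∪ {∞}). Since (X+1)·binom(Y+n, n) ≥ (X+1)(Y+1)^n/n!, this order is in particular > (X+1)(Y+1)^n/n! − 2. -/
open scoped BigOperators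

/-- Total degree of `P ∈ 𝕜[Z, X₁, …, Xₙ]` (variables indexed by `Fin (n+1)`, where
`0` is the variable `Z` and `Fin.succ i` is the variable `Xᵢ`) in the variables
`X₁, …, Xₙ` only. -/
noncomputable def degInX {𝕜 : Type*} [CommRing 𝕜] {n : ℕ}
    (P : MvPolynomial (Fin (n + 1)) 𝕜) : ℕ :=
  P.support.sup fun d => ∑ i : Fin n, d i.succ

lemma aux_choose (n Y : ℕ) :
    ((Y : ℝ) + 1) ^ n / (n.factorial : ℝ) ≤ ((Y + n).choose n : ℝ) := by
  have h1 : (Y + 1) ^ n ≤ (Y + 1).ascFactorial n := Nat.pow_succ_le_ascFactorial _ _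
  rw [Nat.ascFactorial_eq_factorial_mul_choose] at h1
  rw [div_le_iff₀ (by positivity), mul_comm]
  exact_mod_cast h1

lemma aux_exponents (n X Y : ℕ) : ∃ T : Finset (Fin (n + 1) →₀ ℕ),
    T.card = (X + 1) * (Y + n).choose n ∧
      ∀ d ∈ T, d 0 ≤ X ∧ ∑ i : Fin n, d i.succ ≤ Y := by
  classical
  let S : Finset (Fin (n + 1) →₀ ℕ) := Finset.finsuppAntidiag Finset.univ Y
  have hS : ∀ e ∈ S, e 0 + ∑ i : Fin n, e i.succ = Y := by
    intro e he
    have := (Finset.mem_finsuppAntidiag.1 he).1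
    rwa [Fin.sum_univ_succ] at this
  refine ⟨(Finset.range (X + 1) ×ˢ S).image fun p => Finsupp.cons p.1 (Finsupp.tail p.2), ?_, ?_⟩
  · rw [Finset.card_image_of_injOn, Finset.card_product, Finset.card_range,
      Finset.card_finsuppAntidiag_nat_eq_choose]
    · simp
      rw [Nat.add_comm n Y, Nat.choose_symm_add]
    · rintro ⟨a, e⟩ h ⟨a', e'⟩ h' heq
      simp only [Finset.coe_product, Set.mem_prod, Finset.mem_coe] at h h' heq
      have h0 : a = a' := by simpa using DFunLike.congr_fun heq 0
      have hs : ∀ i : Fin n, e i.succ = e' i.succ := fun i => by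
        simpa [Finsupp.tail_apply] using DFunLike.congr_fun heq i.succ
      have h1 := hS e h.2
      have h2 := hS e' h'.2
      simp only [hs] at h1
      refine Prod.ext h0 (Finsupp.ext fun i => ?_)
      refine Fin.cases ?_ hs i
      show e 0 = e' 0
      omega
  · intro d hd
    obtain ⟨⟨a, e⟩, h, rfl⟩ := Finset.mem_image.1 hd
    rw [Finset.mem_product] at h
    have h1 := hS e h.2
    have h2 := Finset.mem_range.1 h.1
    simp only [Finsupp.cons_zero, Finsupp.cons_succ, Finsupp.tail_apply] at *
    omega

/-- The auxiliary-polynomial construction: given power series `f₁, …, fₙ` over a field `𝕜`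
and bounds `X, Y`, there is a nonzero polynomial `Q ∈ 𝕜[Z, X₁, …, Xₙ]` with `deg_Z Q ≤ X`,
total degree at most `Y` in `X₁, …, Xₙ`, and
`ord_{z=0} Q(z, f₁(z), …, fₙ(z)) ≥ (X+1)·C(Y+n, n) − 1 > (X+1)(Y+1)^n/n! − 2`. -/
theorem exists_auxiliary_polynomial (𝕜 : Type*) [Field 𝕜] (n : ℕ) (hn : 1 ≤ n)
    (f : Fin n → PowerSeries 𝕜) (X Y : ℕ) :
    ∃ Q : MvPolynomial (Fin (n + 1)) 𝕜, Q ≠ 0 ∧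
      Q.degreeOf 0 ≤ X ∧ degInX Q ≤ Y ∧
      (((X + 1) * (Y + n).choose n - 1 : ℕ) : ℕ∞) ≤
        (MvPolynomial.aeval (Fin.cases PowerSeries.X f) Q).order ∧
      ∀ m : ℕ, (m : ℝ) ≤ (X + 1) * (Y + 1) ^ n / (n.factorial : ℝ) - 2 →
        (m : ℕ∞) < (MvPolynomial.aeval (Fin.cases PowerSeries.X f) Q).order := by
  classical
  obtain ⟨T, hcard, hT⟩ := aux_exponents n X Y
  set N := (X + 1) * (Y + n).choose n with hN
  have hNpos : 0 < N := Nat.mul_pos (Nat.succ_pos _) (Nat.choose_pos (Nat.le_add_left _ _))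
  let A : (T → 𝕜) →ₗ[𝕜] MvPolynomial (Fin (n + 1)) 𝕜 :=
    ∑ d : T, (MvPolynomial.monomial (d : Fin (n + 1) →₀ ℕ)).comp (LinearMap.proj d)
  have hA : ∀ c, A c = ∑ d : T, MvPolynomial.monomial (d : Fin (n + 1) →₀ ℕ) (c d) := by
    intro c; simp [A, LinearMap.sum_apply]
  let E : MvPolynomial (Fin (n + 1)) 𝕜 →ₗ[𝕜] PowerSeries 𝕜 :=
    (MvPolynomial.aeval (R := 𝕜) (Fin.cases PowerSeries.X f : Fin (n + 1) → PowerSeries 𝕜)).toLinearMap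
  let L : (T → 𝕜) →ₗ[𝕜] (Fin (N - 1) → 𝕜) :=
    LinearMap.pi fun j => (PowerSeries.coeff (R := 𝕜) (j : ℕ)).comp (E.comp A)
  have hker : LinearMap.ker L ≠ ⊥ := by
    apply LinearMap.ker_ne_bot_of_finrank_lt
    simp [hcard]
    omega
  obtain ⟨c, hc, hc0⟩ := (Submodule.ne_bot_iff _).1 hker
  have hcoef : ∀ d : T, (A c).coeff (d : Fin (n + 1) →₀ ℕ) = c d := by
    intro d
    rw [hA, MvPolynomial.coeff_sum]
    simp [MvPolynomial.coeff_monomial]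
  have hsupp : ∀ d ∈ (A c).support, d ∈ T := by
    intro d hd
    by_contra hdT
    rw [MvPolynomial.mem_support_iff, hA, MvPolynomial.coeff_sum] at hd
    apply hd
    refine Finset.sum_eq_zero fun e _ => ?_
    rw [MvPolynomial.coeff_monomial, if_neg]
    rintro rfl
    exact hdT e.2
  have hord : ((N - 1 : ℕ) : ℕ∞) ≤
      (MvPolynomial.aeval (R := 𝕜) (Fin.cases PowerSeries.X f : Fin (n + 1) → PowerSeries 𝕜)
        (A c)).order := by
    apply PowerSeries.nat_le_order
    intro i hi
    exact congrFun (LinearMap.mem_ker.1 hc) ⟨i, hi⟩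
  refine ⟨A c, ?_, ?_, ?_, hord, ?_⟩
  · intro h
    apply hc0
    funext d
    rw [← hcoef, h]
    simp
  · rw [MvPolynomial.degreeOf_le_iff]
    exact fun d hd => (hT d (hsupp d hd)).1
  · exact Finset.sup_le fun d hd => (hT d (hsupp d hd)).2
  · intro m hm
    refine lt_of_lt_of_le ?_ hord
    have h1 := mul_le_mul_of_nonneg_left (aux_choose n Y) (by positivity : (0 : ℝ) ≤ X + 1)
    rw [← mul_div_assoc] at h1
    have h2 : ((m + 2 : ℕ) : ℝ) ≤ (N : ℕ) := by
      rw [hN]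
      push_cast
      linarith
    have h3 : m + 2 ≤ N := by exact_mod_cast h2
    have h4 : m < N - 1 := by omega
    exact_mod_cast h4
end

section
/- Let 𝕜 be a field, n ≥ 1, and f_1, …, f_n ∈ 𝕜[[z]] formal power series such that z, f_1, …, f_n are algebraically independent over 𝕜 (as elements of 𝕜[[z]]). Suppose F : ℕ × ℕ → ℝ satisfies the multiplicity estimate: for every nonzero polynomial P ∈ 𝕜[Z, X_1, …, X_n] one has ord_{z=0} P(z, f_1(z), …, f_n(z)) < F(deg_Z P, deg_X P), where deg_X P denotes the total degree of P in X_1, …, X_n. Then for all X, Y ∈ ℕ one has F(X, Y) > (X+1)·binom(Y+n, n) − 1, and in particular F(X, Y) > (X+1)(Y+1)^n/n! − 1. -/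
open scoped BigOperators

open MvPolynomial in
lemma degInX_mul_X_succ {𝕜 : Type*} [Field 𝕜] {n : ℕ} (P : MvPolynomial (Fin (n + 1)) 𝕜)
    (hP : P ≠ 0) (j : Fin n) : degInX (P * X j.succ) = degInX P + 1 := by
  have hs : P.support.Nonempty := by simpa [Finset.nonempty_iff_ne_empty] using hP
  have key : ∀ d : Fin (n + 1) →₀ ℕ,
      ∑ i : Fin n, (d + Finsupp.single j.succ 1 : Fin (n + 1) →₀ ℕ) i.succ = ∑ i : Fin n, d i.succ + 1 := by
    intro d
    simp [Finset.sum_add_distrib, Finsupp.single_apply]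
  unfold degInX
  rw [support_mul_X, Finset.sup_map]
  apply le_antisymm
  · apply Finset.sup_le
    intro d hd
    simp only [Function.comp_apply, addRightEmbedding_apply]
    rw [key]
    exact Nat.succ_le_succ
      (Finset.le_sup (f := fun d : Fin (n + 1) →₀ ℕ => ∑ i : Fin n, d i.succ) hd)
  · obtain ⟨d, hd, he⟩ := Finset.exists_mem_eq_sup P.support hs
      (fun d : Fin (n + 1) →₀ ℕ => ∑ i : Fin n, d i.succ)
    rw [he]
    rw [← key d]
    exact Finset.le_sup (f := (fun d : Fin (n + 1) →₀ ℕ => ∑ i : Fin n, d i.succ) ∘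
      (addRightEmbedding (Finsupp.single j.succ 1))) hd

open MvPolynomial in
lemma degInX_mul_X_zero {𝕜 : Type*} [Field 𝕜] {n : ℕ} (P : MvPolynomial (Fin (n + 1)) 𝕜) :
    degInX (P * X 0) = degInX P := by
  unfold degInX
  rw [support_mul_X, Finset.sup_map]
  apply Finset.sup_congr rfl
  intro d hd
  simp [Finsupp.single_apply]

open MvPolynomial in
lemma degInX_pows {𝕜 : Type*} [Field 𝕜] {n : ℕ} (P : MvPolynomial (Fin (n + 1)) 𝕜)
    (hP : P ≠ 0) (j : Fin n) (k l : ℕ) :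
    degInX (P * X j.succ ^ l * X 0 ^ k) = degInX P + l := by
  induction k with
  | zero =>
    induction l with
    | zero => simp
    | succ l ih =>
      rw [pow_zero, mul_one] at ih ⊢
      rw [pow_succ, ← mul_assoc, degInX_mul_X_succ _ _ j, ih, add_assoc]
      exact mul_ne_zero hP (pow_ne_zero _ (X_ne_zero _))
  | succ k ih => rw [pow_succ, ← mul_assoc, degInX_mul_X_zero, ih]

open MvPolynomial in
lemma degreeOf_pows {𝕜 : Type*} [Field 𝕜] {n : ℕ} (P : MvPolynomial (Fin (n + 1)) 𝕜)
    (hP : P ≠ 0) (j : Fin n) (k l : ℕ) :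
    degreeOf 0 (P * X j.succ ^ l * X 0 ^ k) = degreeOf 0 P + k := by
  have h1 : P * X j.succ ^ l ≠ 0 := mul_ne_zero hP (pow_ne_zero _ (X_ne_zero _))
  rw [degreeOf_mul_eq h1 (pow_ne_zero _ (X_ne_zero _)),
    degreeOf_mul_eq hP (pow_ne_zero _ (X_ne_zero _)), degreeOf_pow_eq _ _ _ (X_ne_zero _),
    degreeOf_pow_eq _ _ _ (X_ne_zero _), degreeOf_X, degreeOf_X]
  simp [(Fin.succ_ne_zero j).symm]

/-- exponent vectors -/
noncomputable def expVec {n X Y : ℕ} (p : Fin (X + 1) × Sym (Fin (n + 1)) Y) :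
    Fin (n + 1) →₀ ℕ :=
  Finsupp.equivFunOnFinite.symm
    (Fin.cons (p.1 : ℕ) (fun i : Fin n => (p.2 : Multiset (Fin (n + 1))).count i.succ))

lemma sum_count_sym {n Y : ℕ} (s : Sym (Fin (n + 1)) Y) :
    (s : Multiset (Fin (n + 1))).count 0 +
      ∑ i : Fin n, (s : Multiset (Fin (n + 1))).count i.succ = Y := by
  rw [← Fin.sum_univ_succ (fun i => (s : Multiset (Fin (n + 1))).count i)]
  rw [Multiset.sum_count_eq_card (by simp)]
  exact s.2

lemma expVec_injective {n X Y : ℕ} : Function.Injective (expVec (n := n) (X := X) (Y := Y)) := by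
  rintro ⟨a, s⟩ ⟨b, t⟩ h
  have h' := Fin.cons_inj.1 (Finsupp.equivFunOnFinite.symm.injective h)
  obtain ⟨h1, h2⟩ := h'
  have h2' : ∀ i : Fin n, (s : Multiset (Fin (n + 1))).count i.succ =
    (t : Multiset (Fin (n + 1))).count i.succ := fun i => congrFun h2 i
  have hs := sum_count_sym s
  have ht := sum_count_sym t
  simp only [h2'] at hs
  refine Prod.ext (Fin.ext h1) (Subtype.ext (Multiset.ext.2 fun i => ?_))
  refine Fin.cases ?_ h2' i
  change (s : Multiset (Fin (n + 1))).count 0 = (t : Multiset (Fin (n + 1))).count 0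
  omega

open MvPolynomial in
lemma exists_small_poly {𝕜 : Type*} [Field 𝕜] {n : ℕ} (g : Fin (n + 1) → PowerSeries 𝕜)
    (A B : ℕ) : ∃ P : MvPolynomial (Fin (n + 1)) 𝕜, P ≠ 0 ∧ degreeOf 0 P ≤ A ∧ degInX P ≤ B ∧
      (((A + 1) * (B + n).choose n - 1 : ℕ) : ℕ∞) ≤ (aeval g P).order := by
  set N := (A + 1) * (B + n).choose n with hN
  have hNpos : 0 < N := Nat.mul_pos (Nat.succ_pos _) (Nat.choose_pos (by omega))
  let ι := Fin (A + 1) × Sym (Fin (n + 1)) B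
  have hcard : Fintype.card ι = N := by
    simp only [ι, Fintype.card_prod, Fintype.card_fin, Sym.card_sym_eq_choose]
    rw [hN, show n + 1 + B - 1 = B + n by omega, ← Nat.choose_symm_add]
  let L0 : (ι → 𝕜) →ₗ[𝕜] MvPolynomial (Fin (n + 1)) 𝕜 :=
    ∑ i : ι, (monomial (expVec i)) ∘ₗ LinearMap.proj i
  have hL0 : ∀ c, L0 c = ∑ i : ι, monomial (expVec i) (c i) := by
    intro c; simp [L0]
  let L : (ι → 𝕜) →ₗ[𝕜] (Fin (N - 1) → 𝕜) :=
    LinearMap.pi fun j => (PowerSeries.coeff (j : ℕ)) ∘ₗ (aeval g).toLinearMap ∘ₗ L0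
  have hker : LinearMap.ker L ≠ ⊥ := by
    apply LinearMap.ker_ne_bot_of_finrank_lt
    simp only [Module.finrank_fintype_fun_eq_card, Fintype.card_fin, hcard]
    omega
  obtain ⟨c, hc, hc0⟩ := (Submodule.ne_bot_iff _).1 hker
  have hcoeff : ∀ i, coeff (expVec i) (L0 c) = c i := by
    intro i
    rw [hL0, coeff_sum, Finset.sum_eq_single i]
    · simp
    · intro b _ hb
      rw [coeff_monomial, if_neg]
      exact fun h => hb (expVec_injective h)
    · simp
  have hsupp : ∀ d ∈ (L0 c).support, ∃ i : ι, d = expVec i := by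
    intro d hd
    by_contra! hcon
    rw [mem_support_iff, hL0, coeff_sum] at hd
    apply hd
    apply Finset.sum_eq_zero
    intro i _
    rw [coeff_monomial, if_neg (hcon i).symm]
  refine ⟨L0 c, ?_, ?_, ?_, ?_⟩
  · intro h
    apply hc0
    funext i
    rw [← hcoeff i, h]; simp
  · rw [degreeOf_le_iff]
    intro d hd
    obtain ⟨i, rfl⟩ := hsupp d hd
    simp only [expVec, Finsupp.equivFunOnFinite_symm_apply_apply, Fin.cons_zero]
    omega
  · apply Finset.sup_le
    intro d hd
    obtain ⟨i, rfl⟩ := hsupp d hd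
    simp only [expVec, Finsupp.equivFunOnFinite_symm_apply_apply, Fin.cons_succ]
    have := sum_count_sym i.2
    omega
  · apply PowerSeries.nat_le_order
    intro j hj
    exact congrFun (LinearMap.mem_ker.1 hc) ⟨j, hj⟩

/-- Lower bound for any multiplicity-estimate bound: if `z, f₁, …, fₙ` are algebraically
independent over `𝕜` and `F : ℕ × ℕ → ℝ` satisfies
`ord_{z=0} P(z, f₁, …, fₙ) < F (deg_Z P, deg_X P)` for every nonzero polynomial `P`, then
`F (X, Y) > (X+1)·C(Y+n, n) − 1 ≥ (X+1)(Y+1)^n/n! − 1` for all `X, Y`. -/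
theorem multiplicity_bound_lower_estimate (𝕜 : Type*) [Field 𝕜] (n : ℕ) (hn : 1 ≤ n)
    (f : Fin n → PowerSeries 𝕜)
    (hindep : AlgebraicIndependent 𝕜
      (Fin.cases PowerSeries.X f : Fin (n + 1) → PowerSeries 𝕜))
    (F : ℕ × ℕ → ℝ)
    (hF : ∀ P : MvPolynomial (Fin (n + 1)) 𝕜, P ≠ 0 →
      ∀ m : ℕ, (m : ℕ∞) ≤ (MvPolynomial.aeval (Fin.cases PowerSeries.X f) P).order →
        (m : ℝ) < F (P.degreeOf 0, degInX P)) :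
    ∀ X Y : ℕ,
      ((X + 1) * (Y + n).choose n : ℝ) - 1 < F (X, Y) ∧
      (X + 1) * (Y + 1) ^ n / (n.factorial : ℝ) - 1 < F (X, Y) := by
  intro A B
  have main : ((A + 1) * (B + n).choose n : ℝ) - 1 < F (A, B) := by
    obtain ⟨P, hP, hA, hB, ho⟩ := exists_small_poly
      (Fin.cases PowerSeries.X f : Fin (n + 1) → PowerSeries 𝕜) A B
    let j : Fin n := ⟨0, hn⟩
    have h := hF (P * MvPolynomial.X j.succ ^ (B - degInX P) *
      MvPolynomial.X 0 ^ (A - P.degreeOf 0))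
      (mul_ne_zero (mul_ne_zero hP (pow_ne_zero _ (MvPolynomial.X_ne_zero _)))
        (pow_ne_zero _ (MvPolynomial.X_ne_zero _))) ((A + 1) * (B + n).choose n - 1) ?_
    · rw [degInX_pows P hP, degreeOf_pows P hP, Nat.add_sub_cancel' hA,
        Nat.add_sub_cancel' hB] at h
      have hpos : 1 ≤ (A + 1) * (B + n).choose n :=
        Nat.mul_pos (Nat.succ_pos _) (Nat.choose_pos (by omega))
      rw [Nat.cast_sub hpos] at h
      push_cast at h
      exact h
    · rw [map_mul, map_mul, PowerSeries.order_mul, PowerSeries.order_mul, add_assoc]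
      exact ho.trans le_self_add
  refine ⟨main, lt_of_le_of_lt ?_ main⟩
  have h1 : (B + 1) ^ n ≤ n.factorial * (B + n).choose n := by
    rw [← Nat.ascFactorial_eq_factorial_mul_choose]
    exact Nat.pow_succ_le_ascFactorial _ _
  have h2 : ((B : ℝ) + 1) ^ n ≤ n.factorial * (B + n).choose n := by exact_mod_cast h1
  have h3 : (0 : ℝ) < n.factorial := by exact_mod_cast n.factorial_pos
  have h4 : ((A : ℝ) + 1) * (B + 1) ^ n / n.factorial ≤ (A + 1) * (B + n).choose n := by
    rw [div_le_iff₀ h3]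
    have : (0 : ℝ) ≤ (A : ℝ) + 1 := by positivity
    nlinarith [mul_le_mul_of_nonneg_left h2 this]
  linarith
end

section
/- Let 𝕜 be a field, n ≥ 1, f_1, …, f_n ∈ 𝕜[[z]] formal power series, and let t be the transcendence degree of the field 𝕜(z)(f_1, …, f_n) over 𝕜(z) (computed inside 𝕜((z))). For all a, b ∈ ℕ there exists a polynomial P ∈ 𝕜[z][X_1, …, X_n] with deg_z P ≤ a, total degree in X_1, …, X_n at most b, such that P(z, f_1(z), …, f_n(z)) ≠ 0 and ord_{z=0} P(z, f_1, …, f_n) ≥ (a+1)·binom(b+t, t) − 1; since (a+1)·binom(b+t, t) ≥ (a+1)(b+1)^t/t!, this order is in particular > (a+1)(b+1)^t/t! − 2. -/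
open scoped BigOperators

/-- The family consisting of the series `z` together with the series `fⱼ`, `j ∈ s`.
Its algebraic independence over `𝕜` expresses the algebraic independence of the `fⱼ`,
`j ∈ s`, over `𝕜(z)`. -/
noncomputable def familyWithZ {𝕜 : Type*} [Field 𝕜] {n : ℕ} (f : Fin n → PowerSeries 𝕜)
    (s : Finset (Fin n)) : Option {j // j ∈ s} → PowerSeries 𝕜 :=
  fun o => o.elim PowerSeries.X fun j => f j.1

/-- Exponent vector attached to a `z`-exponent and a multiset of size `b`. -/
noncomputable def auxExp {σ : Type*} [Fintype σ] [DecidableEq σ] {a b : ℕ}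
    (x : Fin (a + 1) × Sym (Option σ) b) : Option σ →₀ ℕ :=
  Finsupp.equivFunOnFinite.symm
    (fun o => o.elim (x.1 : ℕ) (fun j => (x.2 : Multiset (Option σ)).count (some j)))

theorem auxExp_none {σ : Type*} [Fintype σ] [DecidableEq σ] {a b : ℕ}
    (x : Fin (a + 1) × Sym (Option σ) b) : auxExp x none = x.1 := rfl

theorem auxExp_some {σ : Type*} [Fintype σ] [DecidableEq σ] {a b : ℕ}
    (x : Fin (a + 1) × Sym (Option σ) b) (j : σ) :
    auxExp x (some j) = (x.2 : Multiset (Option σ)).count (some j) := rfl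

theorem aux_count {σ : Type*} [Fintype σ] [DecidableEq σ] {b : ℕ} (y : Sym (Option σ) b) :
    (y : Multiset (Option σ)).count none
      + ∑ j : σ, (y : Multiset (Option σ)).count (some j) = b := by
  have h := Multiset.sum_count_eq_card (s := Finset.univ) (m := (y : Multiset (Option σ)))
    (fun _ _ => Finset.mem_univ _)
  rw [Fintype.sum_option] at h
  rw [h]
  exact y.2

theorem auxExp_injective {σ : Type*} [Fintype σ] [DecidableEq σ] {a b : ℕ} :
    Function.Injective (auxExp : Fin (a + 1) × Sym (Option σ) b → Option σ →₀ ℕ) := by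
  rintro ⟨i, y⟩ ⟨i', y'⟩ h
  have h0 : i = i' := Fin.ext (DFunLike.congr_fun h none)
  have h1 : ∀ j : σ, (y : Multiset (Option σ)).count (some j)
      = (y' : Multiset (Option σ)).count (some j) := fun j => DFunLike.congr_fun h (some j)
  have h2 := aux_count y
  have h3 := aux_count y'
  simp only [h1] at h2
  have h4 : y = y' := by
    apply Sym.coe_injective
    apply Multiset.ext.2
    rintro (_ | j)
    · omega
    · exact h1 j
  rw [h0, h4]

theorem aux_card (σ : Type*) [Fintype σ] [DecidableEq σ] (a b : ℕ) :
    Fintype.card (Fin (a + 1) × Sym (Option σ) b)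
      = (a + 1) * (b + Fintype.card σ).choose (Fintype.card σ) := by
  rw [Fintype.card_prod, Fintype.card_fin, Sym.card_sym_eq_choose, Fintype.card_option]
  congr 1
  have : Fintype.card σ + 1 + b - 1 = b + Fintype.card σ := by omega
  rw [this, Nat.choose_symm_add]

/-- The auxiliary-polynomial construction for algebraically dependent functions
(the claim (ie_Qab) of the paper): if `t` is the transcendence degree of
`𝕜(z)(f₁, …, fₙ)` over `𝕜(z)` (witnessed by a maximal algebraically independent
subset `s` of the `fᵢ` of cardinality `t`), then for all `a, b ∈ ℕ` there is a
polynomial `P ∈ 𝕜[z][X₁, …, Xₙ]` with `deg_z P ≤ a`, total degree in `X₁, …, Xₙ`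
at most `b`, such that `P(z, f₁, …, fₙ) ≠ 0` and
`ord_{z=0} P(z, f₁, …, fₙ) ≥ (a+1)·C(b+t, t) − 1 > (a+1)(b+1)^t/t! − 2`. -/
theorem exists_auxiliary_polynomial_dependent (𝕜 : Type*) [Field 𝕜] (n : ℕ) (hn : 1 ≤ n)
    (f : Fin n → PowerSeries 𝕜)
    (t : ℕ) (s : Finset (Fin n)) (hcard : s.card = t)
    (hindep : AlgebraicIndependent 𝕜 (familyWithZ f s))
    (hmax : ∀ j : Fin n, j ∉ s → ¬ AlgebraicIndependent 𝕜 (familyWithZ f (insert j s)))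
    (a b : ℕ) :
    ∃ P : MvPolynomial (Fin (n + 1)) 𝕜,
      P.degreeOf 0 ≤ a ∧ degInX P ≤ b ∧
      MvPolynomial.aeval (Fin.cases PowerSeries.X f) P ≠ 0 ∧
      (((a + 1) * (b + t).choose t - 1 : ℕ) : ℕ∞) ≤
        (MvPolynomial.aeval (Fin.cases PowerSeries.X f) P).order ∧
      ∀ m : ℕ, (m : ℝ) ≤ (a + 1) * (b + 1) ^ t / (t.factorial : ℝ) - 2 →
        (m : ℕ∞) < (MvPolynomial.aeval (Fin.cases PowerSeries.X f) P).order := by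
  classical
  set N : ℕ := (a + 1) * (b + t).choose t with hN
  have hchpos : 0 < (b + t).choose t := Nat.choose_pos (by omega)
  have hNpos : 0 < N := by positivity
  let σ := {j // j ∈ s}
  let I := Fin (a + 1) × Sym (Option σ) b
  have hcσ : Fintype.card σ = t := by rw [Fintype.card_coe, hcard]
  have hI : Fintype.card I = N := by rw [aux_card, hcσ]
  let φ : Option σ → Fin (n + 1) := fun o => o.elim 0 (fun j => j.1.succ)
  have hφ : Function.Injective φ := by
    rintro (_ | i) (_ | j) h
    · rfl
    · exact absurd h.symm (Fin.succ_ne_zero _)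
    · exact absurd h (Fin.succ_ne_zero _)
    · exact congrArg some (Subtype.ext (Fin.succ_injective _ h))
  let B : (I → 𝕜) →ₗ[𝕜] MvPolynomial (Option σ) 𝕜 :=
    Fintype.linearCombination 𝕜 (fun x : I => MvPolynomial.monomial (auxExp x) (1 : 𝕜))
  have hB : ∀ c : I → 𝕜, B c = ∑ x, MvPolynomial.monomial (auxExp x) (c x) := by
    intro c
    simp [B, Fintype.linearCombination_apply, MvPolynomial.smul_monomial]
    rfl
  have hBcoeff : ∀ (c : I → 𝕜) (x : I), (B c).coeff (auxExp x) = c x := by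
    intro c x
    rw [hB, MvPolynomial.coeff_sum]
    rw [Finset.sum_eq_single x]
    · simp
    · intro y _ hy
      rw [MvPolynomial.coeff_monomial, if_neg (fun h => hy (auxExp_injective h))]
    · intro h
      exact absurd (Finset.mem_univ x) h
  have hBsupp : ∀ (c : I → 𝕜), ∀ d ∈ (B c).support, ∃ x : I, auxExp x = d := by
    intro c d hd
    by_contra! hne
    rw [MvPolynomial.mem_support_iff, hB, MvPolynomial.coeff_sum] at hd
    apply hd
    apply Finset.sum_eq_zero
    intro x _
    rw [MvPolynomial.coeff_monomial, if_neg (hne x)]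
  let T : MvPolynomial (Option σ) 𝕜 →ₗ[𝕜] (Fin (N - 1) → 𝕜) :=
    (LinearMap.pi (fun k : Fin (N - 1) => PowerSeries.coeff (R := 𝕜) (k : ℕ))).comp
      (MvPolynomial.aeval (familyWithZ f s)).toLinearMap
  have hker : ∃ c : I → 𝕜, c ≠ 0 ∧ T (B c) = 0 := by
    have hlt : Module.finrank 𝕜 (Fin (N - 1) → 𝕜) < Module.finrank 𝕜 (I → 𝕜) := by
      rw [Module.finrank_fintype_fun_eq_card, Module.finrank_fintype_fun_eq_card, hI,
        Fintype.card_fin]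
      omega
    have := LinearMap.ker_ne_bot_of_finrank_lt (f := T.comp B) hlt
    obtain ⟨c, hc, hc0⟩ := (Submodule.ne_bot_iff _).1 this
    exact ⟨c, hc0, hc⟩
  obtain ⟨c, hc0, hc⟩ := hker
  have hQ0 : B c ≠ 0 := by
    intro h
    apply hc0
    funext x
    rw [← hBcoeff c x, h]
    simp
  have hfun : (Fin.cases PowerSeries.X f : Fin (n + 1) → PowerSeries 𝕜) ∘ φ
      = familyWithZ f s := by
    funext o
    rcases o with _ | j
    · rfl
    · rfl
  have hev : MvPolynomial.aeval (Fin.cases PowerSeries.X f : Fin (n + 1) → PowerSeries 𝕜)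
      (MvPolynomial.rename φ (B c)) = MvPolynomial.aeval (familyWithZ f s) (B c) := by
    rw [MvPolynomial.aeval_rename, hfun]
  have hord : ((N - 1 : ℕ) : ℕ∞) ≤
      (MvPolynomial.aeval (Fin.cases PowerSeries.X f : Fin (n + 1) → PowerSeries 𝕜)
        (MvPolynomial.rename φ (B c))).order := by
    rw [hev]
    apply PowerSeries.nat_le_order
    intro k hk
    exact congrFun hc ⟨k, hk⟩
  refine ⟨MvPolynomial.rename φ (B c), ?_, ?_, ?_, hord, ?_⟩
  · have h0 : (0 : Fin (n + 1)) = φ none := rfl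
    rw [h0, MvPolynomial.degreeOf_rename_of_injective hφ, MvPolynomial.degreeOf_le_iff]
    intro d hd
    obtain ⟨x, rfl⟩ := hBsupp c d hd
    rw [auxExp_none]
    omega
  · apply Finset.sup_le
    intro d hd
    rw [MvPolynomial.support_rename_of_injective hφ, Finset.mem_image] at hd
    obtain ⟨e, he, rfl⟩ := hd
    obtain ⟨x, rfl⟩ := hBsupp c e he
    have h1 := Finsupp.degree_mapDomain φ (auxExp x)
    rw [Finsupp.degree_eq_sum, Finsupp.degree_eq_sum, Fin.sum_univ_succ,
      Fintype.sum_option] at h1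
    have h2 : (Finsupp.mapDomain φ (auxExp x)) 0 = auxExp x none :=
      Finsupp.mapDomain_apply hφ (auxExp x) none
    have h3 := aux_count x.2
    simp only [auxExp_some] at h1
    omega
  · rw [hev]
    intro h
    exact hQ0 (hindep.eq_zero_of_aeval_eq_zero _ h)
  · intro m hm
    refine lt_of_lt_of_le ?_ hord
    have hfac : (b + 1) ^ t ≤ t.factorial * (b + t).choose t := by
      rw [← Nat.ascFactorial_eq_factorial_mul_choose]
      exact Nat.pow_succ_le_ascFactorial _ _
    have hfacR : ((b : ℝ) + 1) ^ t ≤ t.factorial * ((b + t).choose t : ℝ) := by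
      exact_mod_cast hfac
    have hpos : (0 : ℝ) < t.factorial := by positivity
    have h1 : ((a : ℝ) + 1) * (b + 1) ^ t / (t.factorial : ℝ) ≤ N := by
      rw [div_le_iff₀ hpos, hN]
      push_cast
      nlinarith [mul_le_mul_of_nonneg_left hfacR (by positivity : (0 : ℝ) ≤ (a : ℝ) + 1)]
    have h2 : (m : ℝ) + 2 ≤ N := by linarith
    have h3 : m + 2 ≤ N := by exact_mod_cast h2
    have h4 : m < N - 1 := by omega
    exact_mod_cast h4
end
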